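/- Let n ≥ t ≥ 2. The cover ideal J_t(C_n) of the t-connected ideal of the cycle C_n contains a regular sequence of monomials of length t (equal to its height) if and only if t divides n. Equivalently, the vertex set of C_n can be partitioned into t pairwise disjoint minimal t-covers if and only if n is a multiple of t. -/

import Mathlib

open MvPolynomial

/-- `C` is a `t`-cover of the cycle `C_n` (vertices `ZMod n`). -/
def IsCycleCover (n t : ℕ) (C : Finset (ZMod n)) : Prop :=
  ∀ a : ZMod n, ∃ k : ℕ, k < t ∧ a + (k : ZMod n) ∈ C

/-- `C` is a minimal `t`-cover of the cycle `C_n`. -/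
def IsMinCycleCover (n t : ℕ) (C : Finset (ZMod n)) : Prop :=
  IsCycleCover n t C ∧ ∀ D ⊂ C, ¬ IsCycleCover n t D

/-!
Monomials form a regular sequence exactly when they are nonconstant with pairwise disjoint supports,
so the cover ideal contains such a sequence of length `t` iff `C_n` has `t` disjoint `t`-covers.
Each of these meets a window of `t` consecutive vertices, and the window has room for only one
vertex of each. Hence the covers are minimal, they exhaust the vertices, and every one of them tiles
`ZMod n` by translates of the window, which forces `t ∣ n`. Conversely, the residue classes modulo
`t` are disjoint covers.
-/

open Function RingTheory.Sequence

section RegularSequences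

variable {σ R : Type*} [CommRing R]

lemma disjoint_finsupp_iff {M : Type*} [AddCommMonoid M] [LinearOrder M] [IsBotZeroClass M]
    {d e : σ →₀ M} : Disjoint d e ↔ ∀ v, d v = 0 ∨ e v = 0 := by
  simp [Finsupp.disjoint_iff, Finset.disjoint_left, or_iff_not_imp_left]

lemma forall_mem_upperClosure_of_add_mem_iff {S : Set (σ →₀ ℕ)} (hS : S.Pairwise Disjoint)
    (h0 : 0 ∉ S) {e : σ →₀ ℕ} :
    (∀ m, e + m ∈ upperClosure S → m ∈ upperClosure S) ↔ ∀ s ∈ S, Disjoint s e := by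
  simp only [mem_upperClosure]
  constructor
  · intro h s hs
    obtain ⟨k, hk, hks⟩ := h (s - e) ⟨s, hs, le_add_tsub⟩
    have hne : k ≠ 0 := fun hk0 => h0 (hk0 ▸ hk)
    obtain rfl : k = s := by
      by_contra hks'
      exact hne (disjoint_self.1 ((hS hk hs hks').mono_right (hks.trans tsub_le_self)))
    refine disjoint_finsupp_iff.2 fun v => ?_
    have hv : k v ≤ k v - e v := hks v
    omega
  · rintro h m ⟨s, hs, hsm⟩
    refine ⟨s, hs, fun v => ?_⟩
    have hv : s v ≤ e v + m v := hsm v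
    have hdisj := disjoint_finsupp_iff.1 (h s hs) v
    omega

lemma ofList_map_monomial_smul_top (l : List (σ →₀ ℕ)) :
    (Ideal.ofList (l.map fun d => monomial d (1 : R)) • ⊤ :
      Submodule (MvPolynomial σ R) (MvPolynomial σ R)) =
      Ideal.span ((fun d => monomial d (1 : R)) '' {d | d ∈ l}) := by
  rw [smul_eq_mul, Ideal.mul_top]
  exact congrArg Ideal.span (Set.ext fun p => List.mem_map)

variable [Nontrivial R]

lemma monomial_mem_span_monomial_iff {S : Set (σ →₀ ℕ)} {m : σ →₀ ℕ} :
    monomial m (1 : R) ∈ Ideal.span ((fun d => monomial d (1 : R)) '' S) ↔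
      m ∈ upperClosure S := by
  classical
  simp [mem_ideal_span_monomial_image, support_monomial]

lemma monomial_mul_mem_span_monomial_imp_iff {S : Set (σ →₀ ℕ)} {e : σ →₀ ℕ} :
    (∀ p : MvPolynomial σ R,
      monomial e 1 * p ∈ Ideal.span ((fun d => monomial d (1 : R)) '' S) →
        p ∈ Ideal.span ((fun d => monomial d (1 : R)) '' S)) ↔
      ∀ m, e + m ∈ upperClosure S → m ∈ upperClosure S := by
  constructor
  · intro h m hm
    rw [← monomial_mem_span_monomial_iff (R := R)] at hm ⊢
    exact h _ (by rwa [monomial_mul, one_mul])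
  · intro h p hp
    rw [mem_ideal_span_monomial_image] at hp ⊢
    refine fun m hm => h m (hp (e + m) ?_)
    rwa [mem_support_iff, coeff_monomial_mul, one_mul, ← mem_support_iff]

lemma isWeaklyRegular_map_monomial_iff {l : List (σ →₀ ℕ)} (h0 : 0 ∉ l) :
    IsWeaklyRegular (MvPolynomial σ R) (l.map fun d => monomial d (1 : R)) ↔
      l.Pairwise Disjoint := by
  induction l using List.reverseRecOn with
  | nil => simp
  | append_singleton l e ih =>
    have h0l : 0 ∉ l := fun h => h0 (List.mem_append_left _ h)
    rw [List.map_append, List.map_singleton, isWeaklyRegular_append_iff,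
      isWeaklyRegular_singleton_iff, ih h0l, List.pairwise_append,
      isSMulRegular_quotient_iff_mem_of_smul_mem, ofList_map_monomial_smul_top]
    simp only [smul_eq_mul, monomial_mul_mem_span_monomial_imp_iff, List.pairwise_singleton,
      List.mem_singleton, forall_eq, true_and]
    exact and_congr_right fun hl =>
      forall_mem_upperClosure_of_add_mem_iff hl.forall h0l

lemma isRegular_map_monomial_iff {l : List (σ →₀ ℕ)} :
    IsRegular (MvPolynomial σ R) (l.map fun d => monomial d (1 : R)) ↔
      0 ∉ l ∧ l.Pairwise Disjoint := by
  have htop : (⊤ : Submodule (MvPolynomial σ R) (MvPolynomial σ R)) ≠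
      Ideal.ofList (l.map fun d => monomial d (1 : R)) • ⊤ ↔ 0 ∉ l := by
    rw [ofList_map_monomial_smul_top, ne_comm, Ne, Ideal.eq_top_iff_one, ← C_1,
      C_apply, monomial_mem_span_monomial_iff]
    simp
  rw [isRegular_iff, htop, and_comm]
  exact and_congr_right isWeaklyRegular_map_monomial_iff

/-- The ideal `I` contains a regular sequence of `c` monomials; a squarefree monomial ideal of
height `c` is König when this holds. -/
def HasRegularMonomialSequence (I : Ideal (MvPolynomial σ R)) (c : ℕ) : Prop :=
  ∃ L : List (MvPolynomial σ R),
    (∀ p ∈ L, p ∈ I) ∧ (∀ p ∈ L, ∃ d : σ →₀ ℕ, p = monomial d 1) ∧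
      IsRegular (MvPolynomial σ R) L ∧ L.length = c

lemma hasRegularMonomialSequence_iff {I : Ideal (MvPolynomial σ R)} {c : ℕ} :
    HasRegularMonomialSequence I c ↔
      ∃ e : Fin c → σ →₀ ℕ, (∀ i, monomial (e i) 1 ∈ I) ∧ (∀ i, e i ≠ 0) ∧
        Pairwise (Disjoint on e) := by
  constructor
  · rintro ⟨L, hI, hmon, hreg, rfl⟩
    obtain ⟨l, rfl⟩ : L ∈ Set.range (List.map fun d => monomial d (1 : R)) := by
      rw [Set.range_list_map]
      exact fun p hp => (hmon p hp).imp fun _ => Eq.symm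
    obtain ⟨h0, hdisj⟩ := isRegular_map_monomial_iff.1 hreg
    rw [List.length_map]
    refine ⟨l.get, fun i => hI _ (List.mem_map_of_mem (l.get_mem i)),
      fun i hi => h0 (hi ▸ l.get_mem i), ?_⟩
    exact (pairwise_disjoint_on _).2 (List.pairwise_iff_get.1 hdisj)
  · rintro ⟨e, hI, h0, hdisj⟩
    refine ⟨(List.ofFn e).map fun d => monomial d (1 : R), ?_, ?_,
      isRegular_map_monomial_iff.2 ⟨?_, ?_⟩, by simp⟩
    · simpa [List.mem_ofFn] using hI
    · simp
    · simpa [List.mem_ofFn] using h0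
    · exact List.pairwise_ofFn.2 ((pairwise_disjoint_on e).1 hdisj)

end RegularSequences

section Counting

lemma exists_equiv_of_leftTotal_of_leftUnique {ι κ : Type*} [Finite κ]
    (hcard : Nat.card κ ≤ Nat.card ι) {r : ι → κ → Prop} (htotal : Relator.LeftTotal r)
    (hunique : Relator.LeftUnique r) : ∃ e : ι ≃ κ, ∀ i k, r i k ↔ e i = k := by
  choose f hf using htotal
  have hinj : Injective f := fun i j hij => hunique (hf i) (hij ▸ hf j)
  let e := Equiv.ofBijective f (hinj.bijective_of_nat_card_le hcard)
  refine ⟨e, fun i k => ⟨fun hik => ?_, fun hik => hik ▸ hf i⟩⟩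
  obtain ⟨j, rfl⟩ := e.surjective k
  exact congrArg e (hunique hik (hf j))

lemma natCard_mul_natCard_of_existsUnique_add_mem {G κ : Type*} [AddGroup G] {w : κ → G}
    {S : Set G} (h : ∀ a, ∃! k, a + w k ∈ S) : Nat.card S * Nat.card κ = Nat.card G := by
  have hbij : Bijective fun p : S × κ => (p.1 : G) - w p.2 := by
    constructor
    · rintro ⟨⟨x, hx⟩, k⟩ ⟨⟨y, hy⟩, l⟩ hxy
      change x - w k = y - w l at hxy
      obtain rfl : k = l :=
        (h (x - w k)).unique (by simpa using hx) (by rw [hxy]; simpa using hy)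
      simpa using hxy
    · intro a
      obtain ⟨k, hk, -⟩ := h a
      exact ⟨(⟨a + w k, hk⟩, k), add_sub_cancel_right a (w k)⟩
  rw [← Nat.card_prod, Nat.card_eq_of_bijective _ hbij]

end Counting

section DisjointCovers

variable {n t : ℕ}

lemma isCycleCover_iff_fin {C : Finset (ZMod n)} :
    IsCycleCover n t C ↔ ∀ a : ZMod n, ∃ k : Fin t, a + ((k : ℕ) : ZMod n) ∈ C := by
  simp [IsCycleCover, Fin.exists_iff]

lemma IsCycleCover.nonempty {C : Finset (ZMod n)} (hC : IsCycleCover n t C) : C.Nonempty :=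
  let ⟨_, _, h⟩ := hC 0
  ⟨_, h⟩

variable {F : Fin t → Finset (ZMod n)}

lemma exists_perm_add_mem_iff (hF : ∀ i, IsCycleCover n t (F i))
    (hdisj : Pairwise (Disjoint on F)) (a : ZMod n) :
    ∃ e : Equiv.Perm (Fin t), ∀ i k : Fin t, a + ((k : ℕ) : ZMod n) ∈ F i ↔ e i = k :=
  exists_equiv_of_leftTotal_of_leftUnique le_rfl (fun i => isCycleCover_iff_fin.1 (hF i) a)
    fun _ _ _ hi hj => hdisj.eq (Finset.not_disjoint_iff.2 ⟨_, hi, hj⟩)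

lemma existsUnique_add_mem (hF : ∀ i, IsCycleCover n t (F i)) (hdisj : Pairwise (Disjoint on F))
    (i : Fin t) (a : ZMod n) : ∃! k : Fin t, a + ((k : ℕ) : ZMod n) ∈ F i := by
  obtain ⟨e, he⟩ := exists_perm_add_mem_iff hF hdisj a
  simp [he]

variable [NeZero t]

lemma dvd_of_pairwise_disjoint_isCycleCover (hF : ∀ i, IsCycleCover n t (F i))
    (hdisj : Pairwise (Disjoint on F)) : t ∣ n := by
  have hcard := natCard_mul_natCard_of_existsUnique_add_mem (S := F 0)
    (w := fun k : Fin t => ((k : ℕ) : ZMod n)) (existsUnique_add_mem hF hdisj 0)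
  rw [Nat.card_zmod, Nat.card_fin] at hcard
  exact Dvd.intro_left _ hcard

lemma isMinCycleCover_of_pairwise_disjoint (hF : ∀ i, IsCycleCover n t (F i))
    (hdisj : Pairwise (Disjoint on F)) (i : Fin t) : IsMinCycleCover n t (F i) := by
  refine ⟨hF i, fun D hD hcover => ?_⟩
  obtain ⟨x, hx, hxD⟩ := Finset.exists_of_ssubset hD
  obtain ⟨k, hk⟩ := isCycleCover_iff_fin.1 hcover x
  obtain rfl : k = 0 :=
    (existsUnique_add_mem hF hdisj i x).unique (hD.subset hk) (by simpa using hx)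
  exact hxD (by simpa using hk)

lemma exists_mem_of_pairwise_disjoint_isCycleCover (hF : ∀ i, IsCycleCover n t (F i))
    (hdisj : Pairwise (Disjoint on F)) (x : ZMod n) : ∃ i, x ∈ F i := by
  obtain ⟨e, he⟩ := exists_perm_add_mem_iff hF hdisj x
  exact ⟨e.symm 0, by simpa using (he (e.symm 0) 0).2 (e.apply_symm_apply 0)⟩

lemma exists_isMinCycleCover_partition_iff [NeZero n] :
    (∃ F : Fin t → Finset (ZMod n),
      (∀ a : Fin t, IsMinCycleCover n t (F a)) ∧
      (∀ a b : Fin t, a ≠ b → Disjoint (F a) (F b)) ∧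
      (Finset.univ : Finset (Fin t)).biUnion F = Finset.univ) ↔
    ∃ F : Fin t → Finset (ZMod n),
      (∀ i, IsCycleCover n t (F i)) ∧ Pairwise (Disjoint on F) := by
  constructor
  · rintro ⟨F, hmin, hdisj, -⟩
    exact ⟨F, fun i => (hmin i).1, fun i j => hdisj i j⟩
  · rintro ⟨F, hF, hdisj⟩
    refine ⟨F, isMinCycleCover_of_pairwise_disjoint hF hdisj, fun _ _ hij => hdisj hij, ?_⟩
    ext x
    simpa using exists_mem_of_pairwise_disjoint_isCycleCover hF hdisj x

end DisjointCovers

section ResidueClasses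

variable {n t : ℕ} [NeZero n]

/-- The vertices of `C_n` in the residue class `r` modulo a divisor `t` of `n`. -/
def residueClass (h : t ∣ n) (r : ZMod t) : Finset (ZMod n) :=
  {x | ZMod.castHom h (ZMod t) x = r}

lemma mem_residueClass {h : t ∣ n} {r : ZMod t} {x : ZMod n} :
    x ∈ residueClass h r ↔ ZMod.castHom h (ZMod t) x = r :=
  Finset.mem_filter_univ x

lemma pairwise_disjoint_residueClass (h : t ∣ n) : Pairwise (Disjoint on residueClass h) :=
  fun _ _ hrs => Finset.disjoint_left.2 fun _ hr hs =>
    hrs ((mem_residueClass.1 hr).symm.trans (mem_residueClass.1 hs))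

variable [NeZero t]

lemma isCycleCover_residueClass (h : t ∣ n) (r : ZMod t) :
    IsCycleCover n t (residueClass h r) := by
  intro a
  refine ⟨(r - ZMod.castHom h (ZMod t) a).val, ZMod.val_lt _, mem_residueClass.2 ?_⟩
  rw [map_add, map_natCast, ZMod.natCast_zmod_val, add_sub_cancel]

lemma exists_pairwise_disjoint_isCycleCover_iff_dvd :
    (∃ F : Fin t → Finset (ZMod n),
      (∀ i, IsCycleCover n t (F i)) ∧ Pairwise (Disjoint on F)) ↔ t ∣ n := by
  refine ⟨fun ⟨_, hF, hdisj⟩ => dvd_of_pairwise_disjoint_isCycleCover hF hdisj, fun h => ?_⟩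
  exact ⟨fun i => residueClass h (ZMod.finEquiv t i), fun _ => isCycleCover_residueClass h _,
    (pairwise_disjoint_residueClass h).comp_of_injective (ZMod.finEquiv t).injective⟩

end ResidueClasses

section CoverIdeal

/-- The cover ideal `J_t(C_n)`, as the intersection of the ideals generated by `t` cyclically
consecutive variables. -/
noncomputable def cycleCoverIdeal (R : Type*) [CommRing R] (n t : ℕ) :
    Ideal (MvPolynomial (ZMod n) R) :=
  ⨅ a : ZMod n,
    Ideal.span {q : MvPolynomial (ZMod n) R | ∃ k : ℕ, k < t ∧ q = X (a + (k : ZMod n))}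

variable {R : Type*} [CommRing R] [Nontrivial R] {n t : ℕ}

lemma monomial_mem_cycleCoverIdeal_iff {d : ZMod n →₀ ℕ} :
    monomial d (1 : R) ∈ cycleCoverIdeal R n t ↔ IsCycleCover n t d.support := by
  classical
  have hgen (a : ZMod n) :
      {q : MvPolynomial (ZMod n) R | ∃ k : ℕ, k < t ∧ q = X (a + (k : ZMod n))} =
        X '' ((fun k : ℕ => a + (k : ZMod n)) '' Set.Iio t) := by
    ext q
    simp [eq_comm]
  simp [cycleCoverIdeal, IsCycleCover, hgen, mem_ideal_span_X_image, support_monomial]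

lemma hasRegularMonomialSequence_cycleCoverIdeal_iff {c : ℕ} :
    HasRegularMonomialSequence (cycleCoverIdeal R n t) c ↔
      ∃ F : Fin c → Finset (ZMod n),
        (∀ i, IsCycleCover n t (F i)) ∧ Pairwise (Disjoint on F) := by
  simp only [hasRegularMonomialSequence_iff, monomial_mem_cycleCoverIdeal_iff]
  constructor
  · rintro ⟨e, hcover, -, hdisj⟩
    exact ⟨fun i => (e i).support, hcover, fun i j hij => Finsupp.disjoint_iff.1 (hdisj hij)⟩
  · rintro ⟨F, hcover, hdisj⟩
    have hsupp (i : Fin c) : (Multiset.toFinsupp (F i).val).support = F i := by simp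
    refine ⟨fun i => Multiset.toFinsupp (F i).val, fun i => ?_, fun i => ?_, fun i j hij => ?_⟩
    · simpa only [hsupp] using hcover i
    · rw [← Finsupp.support_nonempty_iff, hsupp]
      exact (hcover i).nonempty
    · exact Finsupp.disjoint_iff.2 (by simpa only [hsupp] using hdisj hij)

end CoverIdeal

theorem konig_iff_dvd_general {R : Type*} [CommRing R] [Nontrivial R] {n t : ℕ} [NeZero n]
    [NeZero t] :
    (HasRegularMonomialSequence (cycleCoverIdeal R n t) t ↔ t ∣ n) ∧
    ((∃ F : Fin t → Finset (ZMod n),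
        (∀ a : Fin t, IsMinCycleCover n t (F a)) ∧
        (∀ a b : Fin t, a ≠ b → Disjoint (F a) (F b)) ∧
        (Finset.univ : Finset (Fin t)).biUnion F = Finset.univ) ↔ t ∣ n) := by
  rw [hasRegularMonomialSequence_cycleCoverIdeal_iff, exists_isMinCycleCover_partition_iff,
    exists_pairwise_disjoint_isCycleCover_iff_dvd, and_self]

/-- For `n ≥ t ≥ 2`, the cover ideal `J_t(C_n)` (the intersection of the primes
generated by `t` cyclically consecutive variables) contains a regular sequence of
monomials of length `t` (its height) iff `t ∣ n`; equivalently, the vertex set of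
`C_n` can be partitioned into `t` pairwise disjoint minimal `t`-covers iff `t ∣ n`. -/
theorem konig_iff_dvd {K : Type*} [Field K] {n t : ℕ} [NeZero n] (ht : 2 ≤ t) (hn : t ≤ n) :
    ((∃ L : List (MvPolynomial (ZMod n) K),
        (∀ p ∈ L, p ∈ ⨅ a : ZMod n,
          Ideal.span {q : MvPolynomial (ZMod n) K | ∃ k : ℕ, k < t ∧ q = X (a + (k : ZMod n))}) ∧
        (∀ p ∈ L, ∃ d : (ZMod n) →₀ ℕ, p = monomial d 1) ∧
        RingTheory.Sequence.IsRegular (MvPolynomial (ZMod n) K) L ∧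
        L.length = t) ↔ t ∣ n) ∧
    ((∃ F : Fin t → Finset (ZMod n),
        (∀ a : Fin t, IsMinCycleCover n t (F a)) ∧
        (∀ a b : Fin t, a ≠ b → Disjoint (F a) (F b)) ∧
        (Finset.univ : Finset (Fin t)).biUnion F = Finset.univ) ↔ t ∣ n) := by
  have : NeZero t := ⟨by omega⟩
  exact konig_iff_dvd_general
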